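/- Let A be a linear relation between X and Z and B a linear relation between Y and Z. The following are equivalent: (i) there exists a linear relation C between X and Y which is (the graph of) an operator such that A ⊆ B∘C; (ii) ran A ⊆ ran B and mul A ⊆ mul B; (iii) for every x ∈ dom A there exists y ∈ dom B such that A(x) ⊆ B(y). -/

import Mathlib

/-!
Linear relations between vector spaces, following Popovici–Sebestyén,
"Factorizations of Linear Relations".

A linear relation between `X` and `Y` is a linear subspace of `X × Y`,
formalized as `Submodule 𝕂 (X × Y)`.
-/

universe u

namespace LinRel

variable {𝕂 : Type u} [Field 𝕂]
variable {X Y Z : Type u} [AddCommGroup X] [Module 𝕂 X]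
  [AddCommGroup Y] [Module 𝕂 Y] [AddCommGroup Z] [Module 𝕂 Z]

/-- The domain of a linear relation. -/
def dom (R : Submodule 𝕂 (X × Y)) : Submodule 𝕂 X :=
  R.map (LinearMap.fst 𝕂 X Y)

/-- The range of a linear relation. -/
def ran (R : Submodule 𝕂 (X × Y)) : Submodule 𝕂 Y :=
  R.map (LinearMap.snd 𝕂 X Y)

/-- The kernel of a linear relation: `{x | (x, 0) ∈ R}`. -/
def ker (R : Submodule 𝕂 (X × Y)) : Submodule 𝕂 X :=
  R.comap ((LinearMap.id : X →ₗ[𝕂] X).prod (0 : X →ₗ[𝕂] Y))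

/-- The multivalued part of a linear relation: `{y | (0, y) ∈ R}`. -/
def mul (R : Submodule 𝕂 (X × Y)) : Submodule 𝕂 Y :=
  R.comap ((0 : Y →ₗ[𝕂] X).prod (LinearMap.id : Y →ₗ[𝕂] Y))

/-- The inverse of a linear relation: `{(y, x) | (x, y) ∈ R}`. -/
def inv (R : Submodule 𝕂 (X × Y)) : Submodule 𝕂 (Y × X) :=
  R.map ((LinearMap.snd 𝕂 X Y).prod (LinearMap.fst 𝕂 X Y))

/-- The product (composition) of two linear relations:
`S ∘ R = {(x, z) | ∃ y, (x, y) ∈ R ∧ (y, z) ∈ S}`. -/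
def comp (S : Submodule 𝕂 (Y × Z)) (R : Submodule 𝕂 (X × Y)) : Submodule 𝕂 (X × Z) where
  carrier := {p | ∃ y, (p.1, y) ∈ R ∧ (y, p.2) ∈ S}
  add_mem' := by
    rintro ⟨a, c⟩ ⟨a', c'⟩ ⟨y, h1, h2⟩ ⟨y', h1', h2'⟩
    exact ⟨y + y', R.add_mem h1 h1', S.add_mem h2 h2'⟩
  zero_mem' := ⟨0, R.zero_mem, S.zero_mem⟩
  smul_mem' := by
    rintro c ⟨a, b⟩ ⟨y, h1, h2⟩
    exact ⟨c • y, R.smul_mem c h1, S.smul_mem c h2⟩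

/-- The image `R(X₀)` of a subspace `X₀` under a linear relation `R`. -/
def img (R : Submodule 𝕂 (X × Y)) (X₀ : Submodule 𝕂 X) : Submodule 𝕂 Y :=
  ran (R ⊓ X₀.prod ⊤)

/-- The preimage `R⁻¹(Y₀)` of a subspace `Y₀` under a linear relation `R`. -/
def preimg (R : Submodule 𝕂 (X × Y)) (Y₀ : Submodule 𝕂 Y) : Submodule 𝕂 X :=
  img (inv R) Y₀

end LinRel


open LinRel

variable {𝕂 : Type u} [Field 𝕂]
variable {X Y Z : Type u} [AddCommGroup X] [Module 𝕂 X]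
  [AddCommGroup Y] [Module 𝕂 Y] [AddCommGroup Z] [Module 𝕂 Z]

/-!
Every nonempty `A(x)` is a translate of `mul A`. So if `mul A ⊆ mul B`, one common point of `A(x)`
and `B(y)`, that is, `(x, y) ∈ B⁻¹ ∘ A`, already gives `A(x) ⊆ B(y)`. An operator `C` with
`A ⊆ B ∘ C` is therefore obtained by choosing such a `y` linearly in `x`: intersect `B⁻¹ ∘ A` with
`X × K`, where `K` is a complement of `mul (B⁻¹ ∘ A)`.
-/

namespace LinRel

theorem mem_dom {R : Submodule 𝕂 (X × Y)} {x : X} : x ∈ dom R ↔ ∃ y, (x, y) ∈ R := by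
  simp [dom]

theorem mem_ran {R : Submodule 𝕂 (X × Y)} {y : Y} : y ∈ ran R ↔ ∃ x, (x, y) ∈ R := by
  simp [ran]

theorem mem_mul {R : Submodule 𝕂 (X × Y)} {y : Y} : y ∈ mul R ↔ (0, y) ∈ R :=
  Iff.rfl

theorem mem_inv {R : Submodule 𝕂 (X × Y)} {x : X} {y : Y} : (y, x) ∈ inv R ↔ (x, y) ∈ R := by
  simp [inv]

theorem mem_comp {S : Submodule 𝕂 (Y × Z)} {R : Submodule 𝕂 (X × Y)} {x : X} {z : Z} :
    (x, z) ∈ comp S R ↔ ∃ y, (x, y) ∈ R ∧ (y, z) ∈ S :=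
  Iff.rfl

theorem ran_comp_le (S : Submodule 𝕂 (Y × Z)) (R : Submodule 𝕂 (X × Y)) :
    ran (comp S R) ≤ ran S := by
  intro z hz
  obtain ⟨x, y, -, hyz⟩ := mem_ran.mp hz
  exact mem_ran.mpr ⟨y, hyz⟩

theorem mul_comp_of_mul_eq_bot (S : Submodule 𝕂 (Y × Z)) {R : Submodule 𝕂 (X × Y)}
    (hR : mul R = ⊥) : mul (comp S R) = mul S := by
  ext z
  calc z ∈ mul (comp S R) ↔ ∃ y ∈ mul R, (y, z) ∈ S := Iff.rfl
    _ ↔ z ∈ mul S := by simp only [hR, Submodule.mem_bot, exists_eq_left, mem_mul]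

theorem dom_le_dom_inv_comp {A : Submodule 𝕂 (X × Z)} {B : Submodule 𝕂 (Y × Z)}
    (h : ran A ≤ ran B) : dom A ≤ dom (comp (inv B) A) := by
  intro x hx
  obtain ⟨z, hxz⟩ := mem_dom.mp hx
  obtain ⟨y, hyz⟩ := mem_ran.mp (h (mem_ran.mpr ⟨x, hxz⟩))
  exact mem_dom.mpr ⟨y, z, hxz, mem_inv.mpr hyz⟩

theorem sub_mem_mul_iff {R : Submodule 𝕂 (X × Y)} {x : X} {y y' : Y} (hy : (x, y) ∈ R) :
    y' - y ∈ mul R ↔ (x, y') ∈ R := by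
  simpa only [mem_mul, Prod.mk_sub_mk, sub_self] using R.sub_mem_iff_left (x := (x, y')) hy

theorem fiber_subset_fiber_iff_mul_le_mul {A : Submodule 𝕂 (X × Z)} {B : Submodule 𝕂 (Y × Z)}
    {x : X} {y : Y} {z : Z} (hA : (x, z) ∈ A) (hB : (y, z) ∈ B) :
    {w : Z | (x, w) ∈ A} ⊆ {w : Z | (y, w) ∈ B} ↔ mul A ≤ mul B := by
  simp only [Set.subset_def, Set.mem_ofPred_eq, ← sub_mem_mul_iff hA, ← sub_mem_mul_iff hB]
  exact (Equiv.subRight z).forall_congr_right (q := fun w => w ∈ mul A → w ∈ mul B)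

theorem ran_le_and_mul_le_iff_forall_fiber_subset {A : Submodule 𝕂 (X × Z)}
    {B : Submodule 𝕂 (Y × Z)} :
    (ran A ≤ ran B ∧ mul A ≤ mul B) ↔
      ∀ x ∈ dom A, ∃ y ∈ dom B, {z : Z | (x, z) ∈ A} ⊆ {z : Z | (y, z) ∈ B} := by
  constructor
  · rintro ⟨hran, hmul⟩ x hx
    obtain ⟨z, hxz⟩ := mem_dom.mp hx
    obtain ⟨y, hyz⟩ := mem_ran.mp (hran (mem_ran.mpr ⟨x, hxz⟩))
    exact ⟨y, mem_dom.mpr ⟨z, hyz⟩, (fiber_subset_fiber_iff_mul_le_mul hxz hyz).mpr hmul⟩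
  · intro h
    constructor
    · intro z hz
      obtain ⟨x, hxz⟩ := mem_ran.mp hz
      obtain ⟨y, -, hy⟩ := h x (mem_dom.mpr ⟨z, hxz⟩)
      exact mem_ran.mpr ⟨y, hy hxz⟩
    · obtain ⟨y, -, hy⟩ := h 0 (zero_mem _)
      exact (fiber_subset_fiber_iff_mul_le_mul A.zero_mem (hy A.zero_mem)).mp hy

theorem exists_le_mul_eq_bot_dom_eq (R : Submodule 𝕂 (X × Y)) :
    ∃ C ≤ R, mul C = ⊥ ∧ dom C = dom R := by
  obtain ⟨K, hK⟩ := (mul R).exists_isCompl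
  refine ⟨R ⊓ (⊤ : Submodule 𝕂 X).prod K, inf_le_left, ?_, ?_⟩
  · rw [eq_bot_iff]
    rintro y ⟨hyR, -, hyK⟩
    exact hK.disjoint.le_bot ⟨hyR, hyK⟩
  · refine le_antisymm (Submodule.map_mono inf_le_left) fun x hx => ?_
    obtain ⟨y, hxy⟩ := mem_dom.mp hx
    have hy : y ∈ mul R ⊔ K := hK.sup_eq_top ▸ Submodule.mem_top
    obtain ⟨m, hm, k, hk, rfl⟩ := Submodule.mem_sup.mp hy
    have hxk : (x, k) ∈ R := by simpa using R.sub_mem hxy (mem_mul.mp hm)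
    exact mem_dom.mpr ⟨k, hxk, Submodule.mem_top, hk⟩

theorem le_comp_of_le_inv_comp {A : Submodule 𝕂 (X × Z)} {B : Submodule 𝕂 (Y × Z)}
    {C : Submodule 𝕂 (X × Y)} (hC : C ≤ comp (inv B) A) (hdom : dom A ≤ dom C)
    (hmul : mul A ≤ mul B) : A ≤ comp B C := by
  rintro ⟨x, z⟩ hxz
  obtain ⟨y, hxy⟩ := mem_dom.mp (hdom (mem_dom.mpr ⟨z, hxz⟩))
  obtain ⟨w, hxw, hwy⟩ := mem_comp.mp (hC hxy)
  have hfiber := (fiber_subset_fiber_iff_mul_le_mul hxw (mem_inv.mp hwy)).mpr hmul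
  exact mem_comp.mpr ⟨y, hxy, hfiber hxz⟩

end LinRel

/-- Theorem 3.1: existence of an operator `C` with `A ⊆ BC` is equivalent to
`ran A ⊆ ran B` and `mul A ⊆ mul B`, and also to: for every `x ∈ dom A`
there is `y ∈ dom B` with `A(x) ⊆ B(y)`. -/
theorem statement_6 (A : Submodule 𝕂 (X × Z)) (B : Submodule 𝕂 (Y × Z)) :
    ((∃ C : Submodule 𝕂 (X × Y), mul C = ⊥ ∧ A ≤ comp B C) ↔
      (ran A ≤ ran B ∧ mul A ≤ mul B)) ∧
    ((ran A ≤ ran B ∧ mul A ≤ mul B) ↔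
      (∀ x ∈ dom A, ∃ y ∈ dom B,
        {z : Z | (x, z) ∈ A} ⊆ {z : Z | (y, z) ∈ B})) := by
  refine ⟨⟨?_, ?_⟩, ran_le_and_mul_le_iff_forall_fiber_subset⟩
  · rintro ⟨C, hC, hA⟩
    exact ⟨(Submodule.map_mono hA).trans (ran_comp_le B C),
      (Submodule.comap_mono hA).trans (mul_comp_of_mul_eq_bot B hC).le⟩
  · rintro ⟨hran, hmul⟩
    obtain ⟨C, hle, hC, hdom⟩ := exists_le_mul_eq_bot_dom_eq (comp (inv B) A)
    exact ⟨C, hC, le_comp_of_le_inv_comp hle ((dom_le_dom_inv_comp hran).trans_eq hdom.symm) hmul⟩
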